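/- arXiv:0910.5728 — 7 statements merged into one kernel-verified Lean document; each statement's English description precedes it below -/
import Mathlib

section
/- Let n ≥ 1 and let H : ℝⁿ × ℝⁿ → ℝ be a smooth function that is ℤⁿ-periodic in its first argument and bounded below. Define the Hamiltonian H̄ : ℝⁿ⁺¹ × ℝⁿ⁺¹ → ℝ by H̄((x,t),(p,q)) = H(x,p) + q²/2 (where we write points of ℝⁿ⁺¹ as pairs consisting of a vector in ℝⁿ and a real number); H̄ is ℤⁿ⁺¹-periodic in its first argument and bounded below. Then the strict Mañé critical values coincide: c₀(H̄) = c₀(H). -/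
/-!
Write `P : ℝⁿ⁺¹ → ℝⁿ` for the projection forgetting the last coordinate and `J = P†` for the
inclusion `x ↦ (x, 0)`, so that `P ∘ J = id`.

* `c₀(H̄) ≤ c₀(H)`: a pair `(c, u)` lifts to `(J c, u ∘ P)`. Its differential has no `dt`
  component, so the two suprema agree.
* `c₀(H) ≤ c₀(H̄)`: a pair `(c, u)` on `𝕋ⁿ⁺¹` restricts to `(P c, u ∘ J)` on the slice `t = 0`.
  Dropping the nonnegative term `q² / 2` and taking the supremum over the slice alone can only
  decrease the supremum. No convexity of `H` is involved.

The remaining work is to see that the suprema and infima are genuine ones: a continuous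
`ℤᵐ`-periodic function is bounded (`bddAbove_of_periodic`).
-/

open scoped ContDiff

/-- The strict Mañé critical value of a Hamiltonian `H : ℝᵐ × ℝᵐ → ℝ` that is
`ℤᵐ`-periodic in its first argument and bounded below: the infimum, over all
`c ∈ ℝᵐ` and all smooth `ℤᵐ`-periodic functions `u : ℝᵐ → ℝ`, of
`sup_x H (x, c + ∇u(x))`. -/
noncomputable def strictManeCritical (m : ℕ)
    (H : EuclideanSpace ℝ (Fin m) × EuclideanSpace ℝ (Fin m) → ℝ) : ℝ :=
  sInf { y : ℝ | ∃ (c : EuclideanSpace ℝ (Fin m)) (u : EuclideanSpace ℝ (Fin m) → ℝ),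
    ContDiff ℝ ∞ u ∧
    (∀ (x : EuclideanSpace ℝ (Fin m)) (k : Fin m → ℤ),
      u (x + (EuclideanSpace.equiv (Fin m) ℝ).symm (fun i => (k i : ℝ))) = u x) ∧
    y = ⨆ x : EuclideanSpace ℝ (Fin m), H (x, c + gradient u x) }

/-- The suspended Hamiltonian `H̄((x,t),(p,q)) = H(x,p) + q²/2` on `ℝⁿ⁺¹ × ℝⁿ⁺¹`,
where the last coordinate of the base is `t` and the last coordinate of the momentum
is `q`. -/
noncomputable def suspendedHam (n : ℕ)
    (H : EuclideanSpace ℝ (Fin n) × EuclideanSpace ℝ (Fin n) → ℝ) :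
    EuclideanSpace ℝ (Fin (n + 1)) × EuclideanSpace ℝ (Fin (n + 1)) → ℝ :=
  fun q =>
    H ((EuclideanSpace.equiv (Fin n) ℝ).symm (fun i => q.1 i.castSucc),
       (EuclideanSpace.equiv (Fin n) ℝ).symm (fun i => q.2 i.castSucc)) +
    (q.2 (Fin.last n)) ^ 2 / 2

/-- The projection `(x, t) ↦ x`. -/
noncomputable def baseProj (n : ℕ) :
    EuclideanSpace ℝ (Fin (n + 1)) →L[ℝ] EuclideanSpace ℝ (Fin n) :=
  LinearMap.toContinuousLinearMap
    { toFun := fun z => (EuclideanSpace.equiv (Fin n) ℝ).symm (fun i => z i.castSucc)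
      map_add' := fun _ _ => by ext i; simp
      map_smul' := fun _ _ => by ext i; simp }

/-- The inclusion `x ↦ (x, 0)`. -/
noncomputable def sliceIncl (n : ℕ) :
    EuclideanSpace ℝ (Fin n) →L[ℝ] EuclideanSpace ℝ (Fin (n + 1)) :=
  LinearMap.toContinuousLinearMap
    { toFun := fun x => (EuclideanSpace.equiv (Fin (n + 1)) ℝ).symm
        (Fin.snoc (α := fun _ => ℝ) (fun i => x i) 0)
      map_add' := fun _ _ => by
        ext i; refine Fin.lastCases ?_ (fun j => ?_) i <;> simp
      map_smul' := fun _ _ => by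
        ext i; refine Fin.lastCases ?_ (fun j => ?_) i <;> simp }

@[simp] lemma baseProj_apply (n : ℕ) (z : EuclideanSpace ℝ (Fin (n + 1))) (i : Fin n) :
    baseProj n z i = z i.castSucc := rfl

@[simp] lemma sliceIncl_castSucc (n : ℕ) (x : EuclideanSpace ℝ (Fin n)) (i : Fin n) :
    sliceIncl n x i.castSucc = x i := by
  simp [sliceIncl]

@[simp] lemma sliceIncl_last (n : ℕ) (x : EuclideanSpace ℝ (Fin n)) :
    sliceIncl n x (Fin.last n) = 0 := by
  simp [sliceIncl]

@[simp] lemma baseProj_sliceIncl (n : ℕ) (x : EuclideanSpace ℝ (Fin n)) :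
    baseProj n (sliceIncl n x) = x := by
  ext i; simp

lemma inner_sliceIncl (n : ℕ) (x : EuclideanSpace ℝ (Fin n))
    (z : EuclideanSpace ℝ (Fin (n + 1))) :
    inner ℝ (sliceIncl n x) z = inner ℝ x (baseProj n z) := by
  simp [PiLp.inner_apply, Fin.sum_univ_castSucc]

lemma suspendedHam_apply (n : ℕ)
    (H : EuclideanSpace ℝ (Fin n) × EuclideanSpace ℝ (Fin n) → ℝ)
    (z w : EuclideanSpace ℝ (Fin (n + 1))) :
    suspendedHam n H (z, w) = H (baseProj n z, baseProj n w) + (w (Fin.last n)) ^ 2 / 2 := rfl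

lemma inner_gradient_comp {E F : Type*} [NormedAddCommGroup E] [InnerProductSpace ℝ E]
    [CompleteSpace E] [NormedAddCommGroup F] [InnerProductSpace ℝ F] [CompleteSpace F]
    (A : E →L[ℝ] F) {f : F → ℝ} (hf : Differentiable ℝ f) (x v : E) :
    inner ℝ (gradient (fun y => f (A y)) x) v = inner ℝ (gradient f (A x)) (A v) := by
  have h : HasFDerivAt (fun y => f (A y)) ((fderiv ℝ f (A x)).comp A) x :=
    (hf (A x)).hasFDerivAt.comp x A.hasFDerivAt
  simp [gradient, h.fderiv]

lemma gradient_comp_baseProj (n : ℕ) {u : EuclideanSpace ℝ (Fin n) → ℝ}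
    (hu : Differentiable ℝ u) (z : EuclideanSpace ℝ (Fin (n + 1))) :
    gradient (fun y => u (baseProj n y)) z = sliceIncl n (gradient u (baseProj n z)) := by
  refine ext_inner_right ℝ fun v => ?_
  rw [inner_gradient_comp _ hu, inner_sliceIncl]

lemma gradient_comp_sliceIncl (n : ℕ) {u : EuclideanSpace ℝ (Fin (n + 1)) → ℝ}
    (hu : Differentiable ℝ u) (x : EuclideanSpace ℝ (Fin n)) :
    gradient (fun y => u (sliceIncl n y)) x = baseProj n (gradient u (sliceIncl n x)) := by
  refine ext_inner_right ℝ fun v => ?_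
  rw [inner_gradient_comp _ hu, real_inner_comm, inner_sliceIncl, real_inner_comm]

/-- Every point has a `ℤᵐ`-translate in the compact unit cube, so a continuous periodic function
is bounded above. -/
lemma bddAbove_of_periodic (m : ℕ) {F : EuclideanSpace ℝ (Fin m) → ℝ} (hF : Continuous F)
    (hper : ∀ (x : EuclideanSpace ℝ (Fin m)) (k : Fin m → ℤ),
      F (x + (EuclideanSpace.equiv (Fin m) ℝ).symm (fun i => (k i : ℝ))) = F x) :
    BddAbove (Set.range F) := by
  have hK : IsCompact ((EuclideanSpace.equiv (Fin m) ℝ).symm '' Set.Icc 0 1) :=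
    isCompact_Icc.image (EuclideanSpace.equiv (Fin m) ℝ).symm.continuous
  refine (hK.bddAbove_image hF.continuousOn).mono ?_
  rintro _ ⟨x, rfl⟩
  refine ⟨(EuclideanSpace.equiv (Fin m) ℝ).symm (fun i => Int.fract (x i)),
    ⟨_, ⟨fun i => Int.fract_nonneg _, fun i => (Int.fract_lt_one _).le⟩, rfl⟩, ?_⟩
  rw [← hper _ (fun i => ⌊x i⌋)]
  congr 1
  ext i
  simp

lemma bddAbove_ham (m : ℕ) {H : EuclideanSpace ℝ (Fin m) × EuclideanSpace ℝ (Fin m) → ℝ}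
    (hH : Continuous H)
    (hper : ∀ (x p : EuclideanSpace ℝ (Fin m)) (k : Fin m → ℤ),
      H (x + (EuclideanSpace.equiv (Fin m) ℝ).symm (fun i => (k i : ℝ)), p) = H (x, p))
    (c : EuclideanSpace ℝ (Fin m)) {u : EuclideanSpace ℝ (Fin m) → ℝ} (hu : ContDiff ℝ ∞ u)
    (huper : ∀ (x : EuclideanSpace ℝ (Fin m)) (k : Fin m → ℤ),
      u (x + (EuclideanSpace.equiv (Fin m) ℝ).symm (fun i => (k i : ℝ))) = u x) :
    BddAbove (Set.range fun x => H (x, c + gradient u x)) := by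
  refine bddAbove_of_periodic m ?_ fun x k => ?_
  · have h1 : Continuous (fderiv ℝ u) := hu.continuous_fderiv (by simp)
    have h2 : Continuous (gradient u) :=
      (InnerProductSpace.toDual ℝ (EuclideanSpace ℝ (Fin m))).symm.continuous.comp h1
    fun_prop
  · have h : gradient u (x + (EuclideanSpace.equiv (Fin m) ℝ).symm (fun i => (k i : ℝ)))
        = gradient u x := by
      unfold gradient
      rw [← fderiv_comp_add_right, funext fun y => huper y k]
    rw [h, hper]

/-- Lemma 2.2 of the paper: the strict Mañé critical value is unchanged by the
convex suspension `H̄((x,t),(p,q)) = H(x,p) + q²/2`, i.e. `c₀(H̄) = c₀(H)`. -/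
theorem strictManeCritical_suspendedHam (n : ℕ) (hn : 1 ≤ n)
    (H : EuclideanSpace ℝ (Fin n) × EuclideanSpace ℝ (Fin n) → ℝ)
    (hsmooth : ContDiff ℝ ∞ H)
    (hper : ∀ (x p : EuclideanSpace ℝ (Fin n)) (k : Fin n → ℤ),
      H (x + (EuclideanSpace.equiv (Fin n) ℝ).symm (fun i => (k i : ℝ)), p) = H (x, p))
    (hbdd : BddBelow (Set.range H)) :
    strictManeCritical (n + 1) (suspendedHam n H) = strictManeCritical n H := by
  have hHc : Continuous H := hsmooth.continuous
  have hSc : Continuous (suspendedHam n H) := by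
    have : suspendedHam n H = fun q => H (baseProj n q.1, baseProj n q.2)
        + (q.2 (Fin.last n)) ^ 2 / 2 := rfl
    rw [this]
    fun_prop
  have hProj : ∀ k : Fin (n + 1) → ℤ,
      baseProj n ((EuclideanSpace.equiv (Fin (n + 1)) ℝ).symm (fun i => (k i : ℝ)))
        = (EuclideanSpace.equiv (Fin n) ℝ).symm (fun i => ((k i.castSucc : ℤ) : ℝ)) :=
    fun k => by ext i; simp
  have hIncl : ∀ k : Fin n → ℤ,
      sliceIncl n ((EuclideanSpace.equiv (Fin n) ℝ).symm (fun i => (k i : ℝ)))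
        = (EuclideanSpace.equiv (Fin (n + 1)) ℝ).symm
          (fun i => ((Fin.snoc (α := fun _ => ℤ) k 0 i : ℤ) : ℝ)) := fun k => by
    ext i
    refine Fin.lastCases ?_ (fun j => ?_) i <;> simp
  have hSper : ∀ (x p : EuclideanSpace ℝ (Fin (n + 1))) (k : Fin (n + 1) → ℤ),
      suspendedHam n H
        (x + (EuclideanSpace.equiv (Fin (n + 1)) ℝ).symm (fun i => (k i : ℝ)), p)
        = suspendedHam n H (x, p) := fun x p k => by
    rw [suspendedHam_apply, suspendedHam_apply, map_add, hProj, hper]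
  obtain ⟨b, hb⟩ := hbdd
  have hb' : ∀ q, b ≤ H q := fun q => hb ⟨q, rfl⟩
  unfold strictManeCritical
  refine le_antisymm (csInf_le_csInf ?_ ?_ ?_) (le_csInf ?_ ?_)
  · refine ⟨b, ?_⟩
    rintro _ ⟨c, u, hu, huper, rfl⟩
    refine le_trans ?_ (le_ciSup (bddAbove_ham (n + 1) hSc hSper c hu huper) 0)
    rw [suspendedHam_apply]
    exact (hb' _).trans (le_add_of_nonneg_right (by positivity))
  · exact ⟨_, 0, fun _ => 0, contDiff_const, fun _ _ => rfl, rfl⟩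
  · rintro _ ⟨c, u, hu, huper, rfl⟩
    refine ⟨sliceIncl n c, fun z => u (baseProj n z), hu.comp (baseProj n).contDiff,
      fun z k => ?_, ?_⟩
    · beta_reduce
      rw [map_add, hProj, huper]
    · have hsurj : Function.Surjective (baseProj n) :=
        fun x => ⟨sliceIncl n x, baseProj_sliceIncl n x⟩
      rw [← hsurj.iSup_comp]
      refine iSup_congr fun z => ?_
      rw [suspendedHam_apply, gradient_comp_baseProj n (hu.differentiable (by simp)), ← map_add]
      simp
  · exact ⟨_, 0, fun _ => 0, contDiff_const, fun _ _ => rfl, rfl⟩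
  · rintro _ ⟨c, u, hu, huper, rfl⟩
    have hv : ContDiff ℝ ∞ fun x => u (sliceIncl n x) := hu.comp (sliceIncl n).contDiff
    have hvper : ∀ (x : EuclideanSpace ℝ (Fin n)) (k : Fin n → ℤ),
        u (sliceIncl n (x + (EuclideanSpace.equiv (Fin n) ℝ).symm (fun i => (k i : ℝ))))
          = u (sliceIncl n x) := fun x k => by
      rw [map_add, hIncl, huper]
    refine le_trans (csInf_le ?_ ⟨baseProj n c, fun x => u (sliceIncl n x), hv, hvper, rfl⟩) ?_
    · refine ⟨b, ?_⟩
      rintro _ ⟨c, u, hu, huper, rfl⟩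
      exact (hb' _).trans (le_ciSup (bddAbove_ham n hHc hper c hu huper) 0)
    · refine ciSup_le fun x => ?_
      refine le_trans ?_
        (le_ciSup (bddAbove_ham (n + 1) hSc hSper c hu huper) (sliceIncl n x))
      rw [suspendedHam_apply, gradient_comp_sliceIncl n (hu.differentiable (by simp)), map_add,
        baseProj_sliceIncl]
      exact le_add_of_nonneg_right (by positivity)
end

section
/- Let ε > 0 and let f : ℝ → ℝ be a smooth function that is even, satisfies f(s) ≥ 0 for all s, f(s) = 1 for |s| ≤ ε/2, f(s) = 0 for |s| ≥ ε, and f'(s) ≤ 0 for all s ≥ 0. Let r : ℝ → ℝ be a continuous, even function with r(s) > 0 for all s. Let q : ℝ → ℝ be the continuous function defined by q(u) = r(u)f'(u)/u for u ≠ 0 and q(0) = 0, and define g : ℝ → ℝ by g(s) := −∫₀ˢ q(u) du. Then f(s)·r(s) + g(s)·s > 0 for every s ∈ ℝ. -/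
/-!
Since `f'` is odd and `r` is even, `q` is even, so `g` is odd and `s ↦ f s * r s + g s * s` is
even; it suffices to treat `s ≥ 0`. There `q ≤ 0`, hence `g ≥ 0`, and the first summand alone is
positive wherever `f s > 0`. If `f s = 0`, then `f` has dropped from `f 0 = 1` to `0`, so the
mean value theorem gives a point of `(0, s)` where `f' < 0`, that is `q < 0`; by continuity of `q`
this forces `g s > 0`.
-/

open scoped ContDiff

/-- The key positivity in Proposition 2.3 of the paper: with `f` a smooth even bump
function (`f ≡ 1` near `0`, `f ≡ 0` outside `(-ε,ε)`, `f ≥ 0`, `f' ≤ 0` on `[0,∞)`),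
`r` continuous, even and positive, and `g(s) = -∫₀ˢ r(u)f'(u)/u du`, one has
`f(s)·r(s) + g(s)·s > 0` for every `s`, which shows that the stabilizing 1-form
`λ = f(p_t)π*α + g(p_t)dt` satisfies `λ(X_H̄) > 0`. -/
theorem stabilizing_form_positive (ε : ℝ) (hε : 0 < ε)
    (f : ℝ → ℝ) (hf : ContDiff ℝ ∞ f)
    (hfeven : ∀ s : ℝ, f (-s) = f s)
    (hfnonneg : ∀ s : ℝ, 0 ≤ f s)
    (hfone : ∀ s : ℝ, |s| ≤ ε / 2 → f s = 1)
    (hfzero : ∀ s : ℝ, ε ≤ |s| → f s = 0)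
    (hf' : ∀ s : ℝ, 0 ≤ s → deriv f s ≤ 0)
    (r : ℝ → ℝ) (hr : Continuous r)
    (hreven : ∀ s : ℝ, r (-s) = r s)
    (hrpos : ∀ s : ℝ, 0 < r s)
    (q : ℝ → ℝ) (hq : Continuous q)
    (hq0 : q 0 = 0) (hqe : ∀ u : ℝ, u ≠ 0 → q u = r u * deriv f u / u)
    (g : ℝ → ℝ) (hg : ∀ s : ℝ, g s = -∫ u in (0 : ℝ)..s, q u) :
    ∀ s : ℝ, 0 < f s * r s + g s * s := by
  have hqeven : ∀ u, q (-u) = q u := by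
    intro u
    rcases eq_or_ne u 0 with rfl | hu
    · simp
    · have hd : deriv f (-u) = -deriv f u := by
        have h := deriv_comp_neg f u
        rw [funext hfeven] at h
        linarith
      rw [hqe _ (neg_ne_zero.mpr hu), hqe u hu, hreven, hd, mul_neg, neg_div_neg_eq]
  have hgodd : ∀ s, g (-s) = -g s := by
    intro s
    have h := intervalIntegral.integral_comp_neg (a := 0) (b := s) q
    simp only [hqeven, neg_zero] at h
    rw [hg, hg, h, intervalIntegral.integral_symm]
  have hqnonpos : ∀ u, 0 ≤ u → q u ≤ 0 := by
    intro u hu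
    rcases hu.eq_or_lt with rfl | hu'
    · exact hq0.le
    · rw [hqe u hu'.ne']
      exact div_nonpos_of_nonpos_of_nonneg
        (mul_nonpos_of_nonneg_of_nonpos (hrpos u).le (hf' u hu)) hu
  have hf0 : f 0 = 1 := hfone 0 (by rw [abs_zero]; positivity)
  have key : ∀ s, 0 ≤ s → 0 < f s * r s + g s * s := by
    intro s hs
    have hgint : g s = ∫ u in (0 : ℝ)..s, -q u := by
      rw [hg, intervalIntegral.integral_neg]
    rcases (hfnonneg s).eq_or_lt with h0 | hpos
    · have hs' : 0 < s := by
        refine lt_of_le_of_ne hs ?_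
        rintro rfl
        rw [hf0] at h0
        norm_num at h0
      obtain ⟨c, hc, hdc⟩ := exists_deriv_eq_slope f hs' hf.continuous.continuousOn
        (hf.differentiable (by simp)).differentiableOn
      have hdneg : deriv f c < 0 := by
        rw [hdc, ← h0, hf0]
        exact div_neg_of_neg_of_pos (by norm_num) (by linarith)
      have hqc : q c < 0 := by
        rw [hqe c hc.1.ne']
        exact div_neg_of_neg_of_pos (mul_neg_of_pos_of_neg (hrpos c) hdneg) hc.1
      have hgpos : 0 < g s := by
        rw [hgint]
        exact intervalIntegral.integral_pos hs' hq.neg.continuousOn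
          (fun u hu => neg_nonneg.mpr (hqnonpos u hu.1.le))
          ⟨c, ⟨hc.1.le, hc.2.le⟩, neg_pos.mpr hqc⟩
      rw [← h0, zero_mul, zero_add]
      exact mul_pos hgpos hs'
    · have hgnonneg : 0 ≤ g s := by
        rw [hgint]
        exact intervalIntegral.integral_nonneg hs
          (fun u hu => neg_nonneg.mpr (hqnonpos u hu.1))
      exact add_pos_of_pos_of_nonneg (mul_pos hpos (hrpos s)) (mul_nonneg hgnonneg hs)
  intro s
  rcases le_total 0 s with hs | hs
  · exact key s hs
  · have h := key (-s) (neg_nonneg.mpr hs)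
    rwa [hfeven, hreven, hgodd, neg_mul_neg] at h
end

section
/- Let X be a topological space and let constants 0 < δ₁ < δ < ε₂ < ε₁ < ε and c₀, c₁ ∈ ℝ with ε₂ < c₀ < ε₁ and δ₁ < c₁ < δ be given. Let f : X × (−δ,δ) → ℝ be continuous, differentiable in the second variable with ∂_r f(x,r) > 0 for all (x,r), and satisfying |f(x,r)| ≤ ε₂ for all (x,r). Let α, β₀, β₁ : ℝ → ℝ be smooth functions such that: α is even, α(r) = 0 for 0 ≤ r ≤ δ₁, α(r) = 1 for r ≥ ε₁, and α'(r) > 0 for δ₁ < r < ε₁; β₀ is odd, β₀'(r) ≥ 0 for all r, β₀(r) = c₀ for δ₁ ≤ r ≤ ε₂, and β₀(r) = r for r ≥ ε₁; β₁ is odd, β₁'(r) ≥ 0 for all r, β₁(r) = r for 0 ≤ r ≤ δ₁, β₁'(r) > 0 for 0 ≤ r < δ, and β₁(r) = c₁ for r ≥ δ. Define g : X × (−ε,ε) → ℝ by g(x,r) := α(r)β₀(r) + (1 − α(r)) f(x, β₁(r)) (well-defined since |β₁(r)| ≤ c₁ < δ). Then: (i) g(x,r) = f(x,r) whenever |r|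 ≤ δ₁; (ii) g(x,r) = r whenever ε₁ ≤ |r| < ε; (iii) g is differentiable in r with ∂_r g(x,r) > 0 for every (x,r) ∈ X × (−ε,ε). -/
/-!
By the product and chain rules,
`∂_r g = α' (β₀ - f(β₁)) + (1 - α) β₁' ∂_r f(β₁) + α β₀'`.
Since `0 ≤ α ≤ 1` and all other derivatives are nonnegative, the last two terms are nonnegative, and
positivity is checked separately on three ranges of `r ≥ 0`. For `r ≤ δ₁`, `α` attains its minimum
`0`, so `α' = 0` and the middle term is positive. For `δ₁ < r < ε₁`, the first term is positive
because `β₀ ≥ c₀ > ε₂ ≥ f`. For `r ≥ ε₁`, `α` attains its maximum `1`, so `α' = 0`, and the last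
term is `β₀' = 1`. Negative `r` reduces to positive `r`: replacing `f(x,s)` by `-f(x,-s)`, which
satisfies the same hypotheses, replaces `g(x,r)` by `-g(x,-r)`.
-/

open scoped ContDiff

/-- The interpolation construction in the proof of Lemma 2.1 of the paper:
`g(x,r) = α(r)β₀(r) + (1-α(r))f(x,β₁(r))` coincides with `f` for `|r| ≤ δ₁`,
with `r` for `ε₁ ≤ |r| < ε`, and is strictly increasing in `r` throughout. -/
theorem interpolation_monotone_family
    (X : Type*) [TopologicalSpace X]
    (δ₁ δ ε₂ ε₁ ε c₀ c₁ : ℝ)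
    (h0 : 0 < δ₁) (h1 : δ₁ < δ) (h2 : δ < ε₂) (h3 : ε₂ < ε₁) (h4 : ε₁ < ε)
    (hc0 : ε₂ < c₀ ∧ c₀ < ε₁) (hc1 : δ₁ < c₁ ∧ c₁ < δ)
    (f f' : X → ℝ → ℝ)
    (hfcont : ContinuousOn (fun p : X × ℝ => f p.1 p.2) (Set.univ ×ˢ Set.Ioo (-δ) δ))
    (hfdiff : ∀ (x : X), ∀ r ∈ Set.Ioo (-δ) δ, HasDerivAt (f x) (f' x r) r)
    (hf'pos : ∀ (x : X), ∀ r ∈ Set.Ioo (-δ) δ, 0 < f' x r)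
    (hfbdd : ∀ (x : X), ∀ r ∈ Set.Ioo (-δ) δ, |f x r| ≤ ε₂)
    (α β₀ β₁ : ℝ → ℝ)
    (hα : ContDiff ℝ ∞ α) (hβ₀ : ContDiff ℝ ∞ β₀) (hβ₁ : ContDiff ℝ ∞ β₁)
    (hαeven : ∀ r : ℝ, α (-r) = α r)
    (hα0 : ∀ r : ℝ, 0 ≤ r → r ≤ δ₁ → α r = 0)
    (hα1 : ∀ r : ℝ, ε₁ ≤ r → α r = 1)
    (hα' : ∀ r : ℝ, δ₁ < r → r < ε₁ → 0 < deriv α r)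
    (hβ₀odd : ∀ r : ℝ, β₀ (-r) = -β₀ r)
    (hβ₀' : ∀ r : ℝ, 0 ≤ deriv β₀ r)
    (hβ₀const : ∀ r : ℝ, δ₁ ≤ r → r ≤ ε₂ → β₀ r = c₀)
    (hβ₀id : ∀ r : ℝ, ε₁ ≤ r → β₀ r = r)
    (hβ₁odd : ∀ r : ℝ, β₁ (-r) = -β₁ r)
    (hβ₁' : ∀ r : ℝ, 0 ≤ deriv β₁ r)
    (hβ₁id : ∀ r : ℝ, 0 ≤ r → r ≤ δ₁ → β₁ r = r)
    (hβ₁'pos : ∀ r : ℝ, 0 ≤ r → r < δ → 0 < deriv β₁ r)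
    (hβ₁const : ∀ r : ℝ, δ ≤ r → β₁ r = c₁)
    (g : X → ℝ → ℝ)
    (hg : ∀ (x : X) (r : ℝ), g x r = α r * β₀ r + (1 - α r) * f x (β₁ r)) :
    (∀ (x : X) (r : ℝ), |r| ≤ δ₁ → g x r = f x r) ∧
    (∀ (x : X) (r : ℝ), ε₁ ≤ |r| → |r| < ε → g x r = r) ∧
    (∀ (x : X), ∀ r ∈ Set.Ioo (-ε) ε, ∃ d : ℝ, HasDerivAt (g x) d r ∧ 0 < d) := by
  have hαd : Differentiable ℝ α := hα.differentiable (by simp)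
  have hβ₀d : Differentiable ℝ β₀ := hβ₀.differentiable (by simp)
  have hβ₁d : Differentiable ℝ β₁ := hβ₁.differentiable (by simp)
  have hβ₀mono : Monotone β₀ := monotone_of_deriv_nonneg hβ₀d hβ₀'
  have hβ₁mono : Monotone β₁ := monotone_of_deriv_nonneg hβ₁d hβ₁'
  have hαmono : MonotoneOn α (Set.Icc δ₁ ε₁) := by
    refine monotoneOn_of_deriv_nonneg (convex_Icc _ _) hαd.continuous.continuousOn
      hαd.differentiableOn ?_
    intro r hr
    rw [interior_Icc] at hr
    exact (hα' r hr.1 hr.2).le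
  have hαbd_nonneg : ∀ r, 0 ≤ r → 0 ≤ α r ∧ α r ≤ 1 := by
    intro r hr
    rcases le_total r δ₁ with h | h
    · rw [hα0 r hr h]; norm_num
    rcases le_total ε₁ r with h' | h'
    · rw [hα1 r h']; norm_num
    have hle : δ₁ ≤ ε₁ := h.trans h'
    have e0 := hαmono ⟨le_rfl, hle⟩ ⟨h, h'⟩ h
    have e1 := hαmono ⟨h, h'⟩ ⟨hle, le_rfl⟩ h'
    rw [hα0 δ₁ h0.le le_rfl] at e0
    rw [hα1 ε₁ le_rfl] at e1
    exact ⟨e0, e1⟩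
  have hαbd : ∀ r, 0 ≤ α r ∧ α r ≤ 1 := by
    intro r
    rcases le_total 0 r with h | h
    · exact hαbd_nonneg r h
    · rw [← hαeven r]; exact hαbd_nonneg (-r) (by linarith)
  have hβ₁mem : ∀ r, 0 ≤ r → β₁ r ∈ Set.Ioo (-δ) δ := by
    intro r hr
    have a := hβ₁mono hr
    rw [hβ₁id 0 le_rfl h0.le] at a
    have b := hβ₁mono (le_max_left r δ)
    rw [hβ₁const _ (le_max_right r δ)] at b
    exact ⟨by linarith, by linarith [hc1.2]⟩
  -- The half `r ≥ 0` of the monotonicity claim, for one slice `φ = f(x,·)` or its odd reflection.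
  have key : ∀ φ φ' : ℝ → ℝ, (∀ s ∈ Set.Ioo (-δ) δ, HasDerivAt φ (φ' s) s) →
      (∀ s ∈ Set.Ioo (-δ) δ, 0 < φ' s) → (∀ s ∈ Set.Ioo (-δ) δ, |φ s| ≤ ε₂) →
      ∀ r, 0 ≤ r → ∃ d : ℝ,
        HasDerivAt (fun t => α t * β₀ t + (1 - α t) * φ (β₁ t)) d r ∧ 0 < d := by
    intro φ φ' hφ hφ' hφb r hr
    have hm := hβ₁mem r hr
    have hcomp : HasDerivAt (fun t => φ (β₁ t)) (φ' (β₁ r) * deriv β₁ r) r :=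
      (hφ _ hm).comp r (hβ₁d r).hasDerivAt
    refine ⟨_, ((hαd r).hasDerivAt.mul (hβ₀d r).hasDerivAt).add
      (((hαd r).hasDerivAt.const_sub 1).mul hcomp), ?_⟩
    have hpos := hφ' _ hm
    have hbd := (abs_le.mp (hφb _ hm)).2
    rcases le_or_gt r δ₁ with h | h
    · have hz : α r = 0 := hα0 r hr h
      have hmin : IsLocalMin α r := Filter.Eventually.of_forall fun s => by
        rw [hz]; exact (hαbd s).1
      rw [hmin.deriv_eq_zero, hz]
      have := mul_pos hpos (hβ₁'pos r hr (by linarith))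
      linarith
    rcases lt_or_ge r ε₁ with h' | h'
    · have hb := hβ₀mono h.le
      rw [hβ₀const δ₁ le_rfl (by linarith)] at hb
      have t1 : 0 < deriv α r * (β₀ r - φ (β₁ r)) :=
        mul_pos (hα' r h h') (by linarith [hc0.1])
      have t2 : 0 ≤ (1 - α r) * (φ' (β₁ r) * deriv β₁ r) :=
        mul_nonneg (by linarith [(hαbd r).2]) (mul_nonneg hpos.le (hβ₁' r))
      have t3 : 0 ≤ α r * deriv β₀ r := mul_nonneg (hαbd r).1 (hβ₀' r)
      linarith
    · have hz : α r = 1 := hα1 r h'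
      have hmax : IsLocalMax α r := Filter.Eventually.of_forall fun s => by
        rw [hz]; exact (hαbd s).2
      -- A right derivative suffices, which also covers the endpoint `r = ε₁`.
      have hd : deriv β₀ r = 1 := by
        have e1 : HasDerivWithinAt β₀ 1 (Set.Ici r) r :=
          (hasDerivWithinAt_id r (Set.Ici r)).congr
            (fun s hs => hβ₀id s (h'.trans hs)) (hβ₀id r h')
        exact (uniqueDiffWithinAt_Ici r).eq_deriv _ (hβ₀d r).hasDerivAt.hasDerivWithinAt e1
      rw [hmax.deriv_eq_zero, hz, hd]
      norm_num
  refine ⟨?_, ?_, ?_⟩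
  · intro x r hr
    have hr' := abs_le.mp hr
    rw [hg]
    rcases le_total 0 r with h | h
    · rw [hα0 r h hr'.2, hβ₁id r h hr'.2]; ring
    · have a := hα0 (-r) (by linarith) (by linarith)
      have b := hβ₁id (-r) (by linarith) (by linarith)
      rw [hαeven] at a
      rw [hβ₁odd, neg_inj] at b
      rw [a, b]; ring
  · intro x r hr _
    rw [hg]
    rcases le_total 0 r with h | h
    · rw [abs_of_nonneg h] at hr
      rw [hα1 r hr, hβ₀id r hr]; ring
    · rw [abs_of_nonpos h] at hr
      have a := hα1 (-r) hr
      have b := hβ₀id (-r) hr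
      rw [hαeven] at a
      rw [hβ₀odd, neg_inj] at b
      rw [a, b]; ring
  · intro x r _
    have hgx : g x = fun t => α t * β₀ t + (1 - α t) * f x (β₁ t) := funext (hg x)
    rcases le_total 0 r with h | h
    · rw [hgx]
      exact key (f x) (f' x) (hfdiff x) (hf'pos x) (hfbdd x) r h
    · have hneg : ∀ s ∈ Set.Ioo (-δ) δ, -s ∈ Set.Ioo (-δ) δ := fun s hs =>
        ⟨by linarith [hs.2], by linarith [hs.1]⟩
      obtain ⟨d, hd, hdpos⟩ := key (fun s => -f x (-s)) (fun s => f' x (-s))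
        (fun s hs => by
          have e := ((hfdiff x _ (hneg s hs)).comp s (hasDerivAt_neg s)).neg
          rw [mul_neg_one, neg_neg] at e
          exact e)
        (fun s hs => hf'pos x _ (hneg s hs))
        (fun s hs => by rw [abs_neg]; exact hfbdd x _ (hneg s hs))
        (-r) (by linarith)
      refine ⟨d, ?_, hdpos⟩
      have e := (hd.comp r (hasDerivAt_neg r)).neg
      rw [mul_neg_one, neg_neg] at e
      refine e.congr_of_eventuallyEq (Filter.Eventually.of_forall fun t => ?_)
      simp only [hgx, Function.comp_apply, Pi.neg_apply, hαeven, hβ₀odd, hβ₁odd, neg_neg]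
      ring
end

section
/- Let X be a topological space, let 0 < ε₁ < ε, and let g : X × (−ε,ε) → ℝ be a continuous function such that for each x ∈ X the map r ↦ g(x,r) is strictly increasing, and g(x,r) = r whenever ε₁ ≤ |r| < ε. Then there exists a unique function F : X × (−ε,ε) → (−ε,ε) such that g(x, F(x,r)) = r for all (x,r) ∈ X × (−ε,ε). Moreover F is continuous, for each x the map r ↦ F(x,r) is strictly increasing, and F(x,r) = r whenever ε₁ ≤ |r| < ε. If in addition g is differentiable in its second variable with ∂_r g(x,r) > 0 everywhere, then F is differentiable in its second variable with ∂_r F(x,r) = (∂_r g(x, F(x,r)))⁻¹ > 0. -/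
/-!
Each fiber `g x` is continuous and strictly increasing on `(-ε, ε)` and fixes `±ε₁`, so the
intermediate value theorem on `[-ε₁, ε₁]` makes it a bijection of `(-ε, ε)`; `F x` is its inverse.
Uniqueness, monotonicity and the identity near the ends come from injectivity and monotonicity of
`g x`. For joint continuity, if `a < F x r < b` inside `(-ε, ε)`, then `g x a < r < g x b`; these
strict inequalities persist for `(y, q)` near `(x, r)` because `g(·, a)` and `g(·, b)` are
continuous, and they give `a < F y q < b`. The derivative formula is that of an inverse function.
-/

/-- The implicit-function step in the proof of Lemma 2.1 of the paper: a continuous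
family `g(x,·)` of strictly increasing functions of `r ∈ (-ε,ε)` which equal the
identity for `ε₁ ≤ |r| < ε` admits a unique fiberwise inverse
`F : X × (-ε,ε) → (-ε,ε)` with `g(x,F(x,r)) = r`; `F` is continuous, strictly
increasing in `r`, equals the identity for `ε₁ ≤ |r| < ε`, and if `g` has positive
derivative `∂_r g` in its second variable then `F` is differentiable in `r` with
`∂_r F(x,r) = (∂_r g(x,F(x,r)))⁻¹ > 0`. -/
theorem fiberwise_inverse_of_monotone_family
    (X : Type*) [TopologicalSpace X]
    (ε₁ ε : ℝ) (h0 : 0 < ε₁) (h1 : ε₁ < ε)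
    (g g' : X → ℝ → ℝ)
    (hgcont : ContinuousOn (fun p : X × ℝ => g p.1 p.2) (Set.univ ×ˢ Set.Ioo (-ε) ε))
    (hgmono : ∀ x : X, StrictMonoOn (g x) (Set.Ioo (-ε) ε))
    (hgid : ∀ (x : X) (r : ℝ), ε₁ ≤ |r| → |r| < ε → g x r = r) :
    ∃ F : X → ℝ → ℝ,
      (∀ x : X, ∀ r ∈ Set.Ioo (-ε) ε, F x r ∈ Set.Ioo (-ε) ε ∧ g x (F x r) = r) ∧
      (∀ F₂ : X → ℝ → ℝ,
        (∀ x : X, ∀ r ∈ Set.Ioo (-ε) ε, F₂ x r ∈ Set.Ioo (-ε) ε ∧ g x (F₂ x r) = r) →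
        ∀ x : X, ∀ r ∈ Set.Ioo (-ε) ε, F₂ x r = F x r) ∧
      ContinuousOn (fun p : X × ℝ => F p.1 p.2) (Set.univ ×ˢ Set.Ioo (-ε) ε) ∧
      (∀ x : X, StrictMonoOn (F x) (Set.Ioo (-ε) ε)) ∧
      (∀ (x : X) (r : ℝ), ε₁ ≤ |r| → |r| < ε → F x r = r) ∧
      ((∀ x : X, ∀ r ∈ Set.Ioo (-ε) ε, HasDerivAt (g x) (g' x r) r ∧ 0 < g' x r) →
        ∀ x : X, ∀ r ∈ Set.Ioo (-ε) ε,
          HasDerivAt (F x) ((g' x (F x r))⁻¹) r ∧ 0 < (g' x (F x r))⁻¹) := by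
  have hgx : ∀ x : X, ContinuousOn (g x) (Set.Ioo (-ε) ε) := fun x =>
    hgcont.comp (f := fun r : ℝ => (x, r)) (by fun_prop) (fun r hr => ⟨Set.mem_univ _, hr⟩)
  have hex : ∀ (x : X) (r : ℝ), ∃ s, r ∈ Set.Ioo (-ε) ε → s ∈ Set.Ioo (-ε) ε ∧ g x s = r := by
    intro x r
    by_cases hr : r ∈ Set.Ioo (-ε) ε
    · rcases le_or_gt ε₁ |r| with h | h
      · exact ⟨r, fun _ => ⟨hr, hgid x r h (abs_lt.2 hr)⟩⟩
      · have hsub : Set.Icc (-ε₁) ε₁ ⊆ Set.Ioo (-ε) ε := fun s hs =>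
          ⟨by linarith [hs.1], by linarith [hs.2]⟩
        have e1 : g x ε₁ = ε₁ :=
          hgid x ε₁ (abs_of_pos h0).ge (by rwa [abs_of_pos h0])
        have e2 : g x (-ε₁) = -ε₁ :=
          hgid x (-ε₁) (by rw [abs_neg, abs_of_pos h0]) (by rwa [abs_neg, abs_of_pos h0])
        have hivt := intermediate_value_Icc (by linarith : -ε₁ ≤ ε₁) ((hgx x).mono hsub)
        rw [e1, e2] at hivt
        obtain ⟨s, hs, hsr⟩ := hivt ⟨(abs_lt.1 h).1.le, (abs_lt.1 h).2.le⟩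
        exact ⟨s, fun _ => ⟨hsub hs, hsr⟩⟩
    · exact ⟨0, fun h => absurd h hr⟩
  choose F hF using hex
  have hcont : ContinuousOn (fun p : X × ℝ => F p.1 p.2) (Set.univ ×ˢ Set.Ioo (-ε) ε) := by
    rintro ⟨x, r⟩ ⟨-, hr⟩
    have hr' : r ∈ Set.Ioo (-ε) ε := hr
    obtain ⟨hs, hgs⟩ := hF x r hr'
    have hev : ∀ᶠ p : X × ℝ in nhdsWithin (x, r) (Set.univ ×ˢ Set.Ioo (-ε) ε),
        p.2 ∈ Set.Ioo (-ε) ε := by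
      filter_upwards [self_mem_nhdsWithin] with p hp using hp.2
    have hslice : ∀ a ∈ Set.Ioo (-ε) ε, Continuous (fun p : X × ℝ => g p.1 a) := fun a ha =>
      hgcont.comp_continuous (f := fun p : X × ℝ => (p.1, a)) (by fun_prop)
        (fun p => ⟨Set.mem_univ _, ha⟩)
    refine tendsto_order.2 ⟨fun a ha => ?_, fun b hb => ?_⟩
    · obtain ⟨c, hc1, hc2⟩ := exists_between (max_lt ha hs.1)
      have hc : c ∈ Set.Ioo (-ε) ε := ⟨(le_max_right _ _).trans_lt hc1, hc2.trans hs.2⟩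
      have hlt : g x c < r := (hgmono x hc hs hc2).trans_eq hgs
      filter_upwards [hev, nhdsWithin_le_nhds
        ((isOpen_lt (hslice c hc) continuous_snd).mem_nhds hlt)] with p hp hpc
      obtain ⟨hps, hpg⟩ := hF p.1 p.2 hp
      have hpc' : g p.1 c < g p.1 (F p.1 p.2) := by rw [hpg]; exact hpc
      exact ((le_max_left _ _).trans_lt hc1).trans (((hgmono p.1).lt_iff_lt hc hps).1 hpc')
    · obtain ⟨c, hc1, hc2⟩ := exists_between (lt_min hb hs.2)
      have hc : c ∈ Set.Ioo (-ε) ε := ⟨hs.1.trans hc1, hc2.trans_le (min_le_right _ _)⟩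
      have hlt : r < g x c := hgs.symm.trans_lt (hgmono x hs hc hc1)
      filter_upwards [hev, nhdsWithin_le_nhds
        ((isOpen_lt continuous_snd (hslice c hc)).mem_nhds hlt)] with p hp hpc
      obtain ⟨hps, hpg⟩ := hF p.1 p.2 hp
      have hpc' : g p.1 (F p.1 p.2) < g p.1 c := by rw [hpg]; exact hpc
      exact (((hgmono p.1).lt_iff_lt hps hc).1 hpc').trans (hc2.trans_le (min_le_left _ _))
  refine ⟨F, hF, ?_, hcont, ?_, ?_, ?_⟩
  · intro F₂ hF₂ x r hr
    exact (hgmono x).injOn (hF₂ x r hr).1 (hF x r hr).1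
      ((hF₂ x r hr).2.trans (hF x r hr).2.symm)
  · intro x r hr q hq hrq
    refine ((hgmono x).lt_iff_lt (hF x r hr).1 (hF x q hq).1).1 ?_
    rwa [(hF x r hr).2, (hF x q hq).2]
  · intro x r hr1 hr2
    have hr : r ∈ Set.Ioo (-ε) ε := abs_lt.1 hr2
    exact (hgmono x).injOn (hF x r hr).1 hr ((hF x r hr).2.trans (hgid x r hr1 hr2).symm)
  · intro hg x r hr
    have hnhds : Set.Ioo (-ε) ε ∈ nhds r := isOpen_Ioo.mem_nhds hr
    have hFx : ContinuousOn (F x) (Set.Ioo (-ε) ε) :=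
      hcont.comp (f := fun r : ℝ => (x, r)) (by fun_prop) (fun r hr => ⟨Set.mem_univ _, hr⟩)
    obtain ⟨hd, hpos⟩ := hg x _ (hF x r hr).1
    refine ⟨HasDerivAt.of_local_left_inverse (hFx.continuousAt hnhds) hd hpos.ne' ?_,
      inv_pos.2 hpos⟩
    filter_upwards [hnhds] with q hq using (hF x q hq).2
end

section
/- Let A be a 2×2 integer matrix, let P be an invertible 2×2 real matrix, and let λ > 1 be a real number such that P·A = D·P, where D = diag(λ, λ⁻¹) and A is regarded as a real matrix. (It follows that det A = 1, so A is invertible over ℤ.) Equip ℤ² × ℤ with the semidirect product multiplication (v,l)·(v',l') := (v + Aˡ v', l + l'), where Aˡ denotes the l-th power of A acting on ℤ² (using the integer inverse of A for negative l). Define ψ : ℤ² × ℤ → ℝ³ by ψ(v,l) := ((P·v)₁, (P·v)₂, l·log λ), where P·v is the image of v under P in ℝ². Then ψ is an injective group homomorphism from ℤ² ⋊_A ℤ into (ℝ³, ⋆); that is, ψ((v,l)·(v',l')) = ψ(v,l) ⋆ ψ(v',l') for all (v,l), (v',l'), and ψ is injective. -/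
/-!
The relation `P * A = D * P` with `D = diag(λ, λ⁻¹)` says that `P` semiconjugates `A` to `D`, so it
semiconjugates `A ^ l` to `D ^ l = diag(λ ^ l, λ ^ (-l))` for every integer `l`
(`mul_map_zpow_eq`). Since `λ ^ l = exp (l * log λ)`, this is exactly the multiplicativity of `ψ`.
Taking determinants gives `det A = det D = 1`, and injectivity follows from that of `P` and of
multiplication by `log λ ≠ 0`.
-/

/-- The solvable group multiplication on ℝ³:
`(x,y,z)⋆(x',y',z') = (x + eᶻx', y + e⁻ᶻy', z + z')`. -/
noncomputable def solMul (a b : ℝ × ℝ × ℝ) : ℝ × ℝ × ℝ :=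
  (a.1 + Real.exp a.2.2 * b.1, a.2.1 + Real.exp (-a.2.2) * b.2.1, a.2.2 + b.2.2)

/-- The semidirect product multiplication on `ℤ² × ℤ` twisted by an invertible
integer matrix `A`: `(v,l)·(v',l') = (v + Aˡv', l + l')`. -/
def sdMul (A : (Matrix (Fin 2) (Fin 2) ℤ)ˣ) (p q : (Fin 2 → ℤ) × ℤ) :
    (Fin 2 → ℤ) × ℤ :=
  (p.1 + ((A ^ p.2 : (Matrix (Fin 2) (Fin 2) ℤ)ˣ) : Matrix (Fin 2) (Fin 2) ℤ).mulVec q.1,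
   p.2 + q.2)

/-- The map `ψ(v,l) = ((P·v)₁, (P·v)₂, l·log λ)` from `ℤ² ⋊_A ℤ` to Sol. -/
noncomputable def psiSol (P : Matrix (Fin 2) (Fin 2) ℝ) (lam : ℝ)
    (p : (Fin 2 → ℤ) × ℤ) : ℝ × ℝ × ℝ :=
  (P.mulVec (fun i => ((p.1 i : ℤ) : ℝ)) 0,
   P.mulVec (fun i => ((p.1 i : ℤ) : ℝ)) 1,
   (p.2 : ℝ) * Real.log lam)

/-- The one-parameter group `u ↦ diag(u, u⁻¹)` of diagonal matrices of determinant one. -/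
noncomputable def diagHom : ℝˣ →* Matrix (Fin 2) (Fin 2) ℝ where
  toFun u := Matrix.diagonal ![(u : ℝ), (u : ℝ)⁻¹]
  map_one' := by
    ext i j
    fin_cases i <;> fin_cases j <;> simp
  map_mul' u v := by
    ext i j
    fin_cases i <;> fin_cases j <;> simp [mul_comm]

theorem mul_map_zpow_eq
    (A : (Matrix (Fin 2) (Fin 2) ℤ)ˣ) (P : Matrix (Fin 2) (Fin 2) ℝ)
    (lam : ℝ) (hlam : lam ≠ 0)
    (hrel : P * ((A : Matrix (Fin 2) (Fin 2) ℤ).map (Int.cast : ℤ → ℝ)) =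
      Matrix.diagonal ![lam, lam⁻¹] * P) (l : ℤ) :
    P * (((A ^ l : (Matrix (Fin 2) (Fin 2) ℤ)ˣ) : Matrix (Fin 2) (Fin 2) ℤ).map
      (Int.cast : ℤ → ℝ)) = Matrix.diagonal ![lam ^ l, (lam ^ l)⁻¹] * P := by
  let B : (Matrix (Fin 2) (Fin 2) ℝ)ˣ :=
    Units.map ((Int.castRingHom ℝ).mapMatrix (m := Fin 2)).toMonoidHom A
  have h : SemiconjBy P (B : Matrix (Fin 2) (Fin 2) ℝ)
      (diagHom.toHomUnits (Units.mk0 lam hlam)) := hrel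
  have h' := h.units_zpow_right l
  rw [← map_zpow, ← map_zpow] at h'
  have e : ((Units.mk0 lam hlam ^ l : ℝˣ) : ℝ) = lam ^ l := by simp
  rw [← e]
  exact h'

/-- If `P·A = diag(λ, λ⁻¹)·P` with `P` invertible and `λ > 1`, then `det A = 1` and
`ψ(v,l) = (P·v, l·log λ)` is an injective group homomorphism from the semidirect
product `ℤ² ⋊_A ℤ` into `(ℝ³, ⋆) = Sol`. -/
theorem lattice_embedding_into_sol
    (A : (Matrix (Fin 2) (Fin 2) ℤ)ˣ)
    (P : Matrix (Fin 2) (Fin 2) ℝ) (hP : IsUnit P)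
    (lam : ℝ) (hlam : 1 < lam)
    (hrel : P * ((A : Matrix (Fin 2) (Fin 2) ℤ).map (Int.cast : ℤ → ℝ)) =
      Matrix.diagonal ![lam, lam⁻¹] * P) :
    (A : Matrix (Fin 2) (Fin 2) ℤ).det = 1 ∧
    (∀ p q : (Fin 2 → ℤ) × ℤ,
      psiSol P lam (sdMul A p q) = solMul (psiSol P lam p) (psiSol P lam q)) ∧
    Function.Injective (psiSol P lam) := by
  have h0 : 0 < lam := by linarith
  have hlog : Real.log lam ≠ 0 := (Real.log_pos hlam).ne'
  refine ⟨?_, ?_, ?_⟩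
  · have hd := congrArg Matrix.det hrel
    have hPd : P.det ≠ 0 := ((Matrix.isUnit_iff_isUnit_det P).1 hP).ne_zero
    rw [Matrix.det_mul, Matrix.det_mul, mul_comm] at hd
    have hd' := mul_right_cancel₀ hPd hd
    have hc : (((A : Matrix (Fin 2) (Fin 2) ℤ).det : ℤ) : ℝ) = 1 := by
      rw [Int.cast_det, hd']
      simp [Matrix.det_diagonal, Fin.prod_univ_two, h0.ne']
    exact_mod_cast hc
  · rintro ⟨v, l⟩ ⟨w, m⟩
    have hexp : Real.exp ((l : ℝ) * Real.log lam) = lam ^ l := by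
      rw [mul_comm, Real.exp_mul, Real.exp_log h0, Real.rpow_intCast]
    have hcast : (fun i => (((v + ((A ^ l : (Matrix (Fin 2) (Fin 2) ℤ)ˣ) :
        Matrix (Fin 2) (Fin 2) ℤ).mulVec w) i : ℤ) : ℝ)) =
        (fun i => (v i : ℝ)) + (((A ^ l : (Matrix (Fin 2) (Fin 2) ℤ)ˣ) :
          Matrix (Fin 2) (Fin 2) ℤ).map (Int.cast : ℤ → ℝ)).mulVec (fun i => (w i : ℝ)) := by
      ext i
      fin_cases i <;> simp
    simp only [psiSol, sdMul, solMul, hcast, Matrix.mulVec_add, Matrix.mulVec_mulVec,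
      mul_map_zpow_eq A P lam h0.ne' hrel l, Real.exp_neg, hexp]
    simp only [← Matrix.mulVec_mulVec, Pi.add_apply, Matrix.mulVec_diagonal]
    simp [add_mul]
  · rintro ⟨v, l⟩ ⟨w, m⟩ h
    simp only [psiSol, Prod.mk.injEq] at h
    obtain ⟨h1, h2, h3⟩ := h
    have hlm : l = m := by exact_mod_cast mul_right_cancel₀ hlog h3
    have hvw := Matrix.mulVec_injective_of_isUnit hP
      (show P.mulVec (fun i => (v i : ℝ)) = P.mulVec (fun i => (w i : ℝ)) by
        ext i
        fin_cases i
        · exact h1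
        · exact h2)
    have hv : v = w := by
      ext i
      exact_mod_cast congrFun hvw i
    rw [hv, hlm]
end

section
/- Consider differentiable functions M_x, M_y, M_z : ℝ → ℝ satisfying the reduced ODE system: M_x' = M_x M_z, M_y' = −M_y M_z, M_z' = M_y² − M_x(M_x + 1). Suppose there is T > 0 such that M_x, M_y, M_z are all T-periodic, that M_x(0)·M_y(0) = 0, and that (M_x(0) + 1)² + M_y(0)² + M_z(0)² = 1. Then M_x(t) = 0, M_y(t) = 0 and M_z(t) = 0 for all t ∈ ℝ. -/
/-!
The energy `(M_x+1)² + M_y² + M_z²` is a first integral, and `M_x`, `M_y` solve scalar linear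
equations, so each of them is its initial value times a positive factor. If `M_x(0) = 0`, then
`M_x ≡ 0` and the energy relation forces `M_y = M_z = 0`. Otherwise `M_y ≡ 0`, `M_x` never
vanishes, and on the circle `(M_x+1)² + M_z² = 1` (a homoclinic orbit to the origin) the slope
`M_z / M_x` has derivative `1`, which contradicts periodicity.
-/

/-- A solution of `f' = f g` with `g` continuous is its initial value times the exponential of
a primitive of `g`; only positivity of the factor is recorded. -/
lemma linear_ode_eq_pos_mul {f g : ℝ → ℝ} (hg : Continuous g)
    (hf : ∀ t, HasDerivAt f (f t * g t) t) (t : ℝ) :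
    ∃ c : ℝ, 0 < c ∧ f t = f 0 * c := by
  have hG : ∀ s, HasDerivAt (fun s => ∫ u in (0 : ℝ)..s, g u) (g s) s := fun s =>
    hg.integral_hasStrictDerivAt 0 s |>.hasDerivAt
  have hd : ∀ s, HasDerivAt (fun s => f s * Real.exp (-∫ u in (0 : ℝ)..s, g u)) 0 s := by
    intro s
    refine HasDerivAt.congr_deriv ((hf s).mul (hG s).neg.exp) ?_
    simp only [Pi.neg_apply]
    ring
  have hc := is_const_of_deriv_eq_zero (fun s => (hd s).differentiableAt)
    (fun s => (hd s).deriv) t 0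
  refine ⟨Real.exp (∫ u in (0 : ℝ)..t, g u), Real.exp_pos _, ?_⟩
  simp only [intervalIntegral.integral_same, neg_zero, Real.exp_zero, mul_one] at hc
  rw [← hc, mul_assoc, ← Real.exp_add]
  simp

/-- For a `T`-periodic solution of the reduced system `M_x' = M_x M_z`,
`M_y' = -M_y M_z`, `M_z' = M_y² - M_x(M_x+1)` lying on the critical energy level
`(M_x+1)² + M_y² + M_z² = 1` and with `M_x(0)·M_y(0) = 0`, the solution is the
equilibrium `M_x ≡ M_y ≡ M_z ≡ 0`. -/
theorem sol_periodic_orbit_m_zero_is_equilibrium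
    (Mx My Mz : ℝ → ℝ)
    (hMx : ∀ t : ℝ, HasDerivAt Mx (Mx t * Mz t) t)
    (hMy : ∀ t : ℝ, HasDerivAt My (-(My t * Mz t)) t)
    (hMz : ∀ t : ℝ, HasDerivAt Mz (My t ^ 2 - Mx t * (Mx t + 1)) t)
    (T : ℝ) (hT : 0 < T)
    (hMxper : ∀ t : ℝ, Mx (t + T) = Mx t)
    (hMyper : ∀ t : ℝ, My (t + T) = My t)
    (hMzper : ∀ t : ℝ, Mz (t + T) = Mz t)
    (hm : Mx 0 * My 0 = 0)
    (hE : (Mx 0 + 1) ^ 2 + My 0 ^ 2 + Mz 0 ^ 2 = 1) :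
    ∀ t : ℝ, Mx t = 0 ∧ My t = 0 ∧ Mz t = 0 := by
  have hcont : Continuous Mz := continuous_iff_continuousAt.2 fun t => (hMz t).continuousAt
  have hEn : ∀ t, (Mx t + 1) ^ 2 + My t ^ 2 + Mz t ^ 2 = 1 := by
    intro t
    have hd : ∀ s, HasDerivAt (fun s => (Mx s + 1) ^ 2 + My s ^ 2 + Mz s ^ 2) 0 s := by
      intro s
      refine HasDerivAt.congr_deriv (((((hMx s).add_const 1).pow 2).add ((hMy s).pow 2)).add
        ((hMz s).pow 2)) ?_
      push_cast
      ring
    exact (is_const_of_deriv_eq_zero (fun s => (hd s).differentiableAt)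
      (fun s => (hd s).deriv) t 0).trans hE
  by_cases hx : Mx 0 = 0
  · intro t
    obtain ⟨c, -, hc⟩ := linear_ode_eq_pos_mul hcont hMx t
    have hxt : Mx t = 0 := by rw [hc, hx, zero_mul]
    have h := hEn t
    rw [hxt] at h
    refine ⟨hxt, ?_, ?_⟩
    · exact pow_eq_zero_iff two_ne_zero |>.1 (by nlinarith [sq_nonneg (My t), sq_nonneg (Mz t)])
    · exact pow_eq_zero_iff two_ne_zero |>.1 (by nlinarith [sq_nonneg (My t), sq_nonneg (Mz t)])
  · exfalso
    have hy0 : My 0 = 0 := (mul_eq_zero.1 hm).resolve_left hx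
    have hy : ∀ t, My t = 0 := by
      intro t
      obtain ⟨c, -, hc⟩ := linear_ode_eq_pos_mul (f := My) (g := fun s => -Mz s) hcont.neg
        (fun s => by simpa using hMy s) t
      rw [hc, hy0, zero_mul]
    have hxne : ∀ t, Mx t ≠ 0 := by
      intro t
      obtain ⟨c, hpos, hc⟩ := linear_ode_eq_pos_mul hcont hMx t
      rw [hc]
      exact mul_ne_zero hx hpos.ne'
    have hd : ∀ s, HasDerivAt (fun s => Mz s / Mx s - s) 0 s := by
      intro s
      refine HasDerivAt.congr_deriv (((hMz s).div (hMx s) (hxne s)).sub (hasDerivAt_id s)) ?_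
      have h := hEn s
      have hne := hxne s
      rw [hy s] at h ⊢
      field_simp
      -- On the energy circle, `M_x² + M_z² = -2 M_x`.
      linear_combination -h
    have hc := is_const_of_deriv_eq_zero (fun s => (hd s).differentiableAt)
      (fun s => (hd s).deriv) T 0
    have h1 := hMxper 0
    have h2 := hMzper 0
    rw [zero_add] at h1 h2
    simp only [h1, h2] at hc
    linarith
end

section
/- Consider differentiable functions M_x, M_y, M_z : ℝ → ℝ satisfying the reduced ODE system: M_x' = M_x M_z, M_y' = −M_y M_z, M_z' = M_y² − M_x(M_x + 1). Suppose there is T > 0 such that M_x, M_y, M_z are all T-periodic, and that (M_x(0) + 1)² + M_y(0)² + M_z(0)² = 1. Then ∫₀ᵀ M_z(t) dt = 0. -/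
/-!
With `I t = ∫₀ᵗ Mz`, the linear equations for `Mx` and `My` integrate to `Mx t = Mx 0 * exp (I t)`
and `My t = My 0 * exp (-I t)` (`eq_mul_exp_integral`). If `Mx 0 ≠ 0`, periodicity of `Mx` forces
`exp (I T) = 1`, so `I T = 0`. If `Mx 0 = 0`, the energy condition forces `My 0 = Mz 0 = 0`; then
`Mx` and `My` vanish identically, so `Mz` is constant, hence zero.
-/

/-- The solution formula for the scalar linear equation `f' = f g` with continuous `g`. -/
theorem eq_mul_exp_integral {f g : ℝ → ℝ} (hg : Continuous g)
    (hf : ∀ t : ℝ, HasDerivAt f (f t * g t) t) (t : ℝ) :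
    f t = f 0 * Real.exp (∫ s in (0 : ℝ)..t, g s) := by
  have hI : ∀ t : ℝ, HasDerivAt (fun u => ∫ s in (0 : ℝ)..u, g s) (g t) t := fun t =>
    hg.integral_hasStrictDerivAt 0 t |>.hasDerivAt
  have hd : ∀ t : ℝ, HasDerivAt (fun u => f u * Real.exp (-∫ s in (0 : ℝ)..u, g s)) 0 t := by
    intro t
    refine ((hf t).mul (hI t).fun_neg.exp).congr_deriv ?_
    ring
  have h := is_const_of_deriv_eq_zero (fun t => (hd t).differentiableAt)
    (fun t => (hd t).deriv) t 0
  simp only [intervalIntegral.integral_same, neg_zero, Real.exp_zero, mul_one] at h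
  rw [← h, mul_assoc, ← Real.exp_add, neg_add_cancel, Real.exp_zero, mul_one]

/-- The Claim of the paper: for any `T`-periodic solution of the reduced system
`M_x' = M_x M_z`, `M_y' = -M_y M_z`, `M_z' = M_y² - M_x(M_x+1)` lying on the Mañé
critical energy level `(M_x+1)² + M_y² + M_z² = 1`, the integral of `M_z` over a
period vanishes; hence every closed orbit on the critical level is homologous to
zero in Γ\Sol. -/
theorem sol_critical_periodic_orbit_integral_vanishes
    (Mx My Mz : ℝ → ℝ)
    (hMx : ∀ t : ℝ, HasDerivAt Mx (Mx t * Mz t) t)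
    (hMy : ∀ t : ℝ, HasDerivAt My (-(My t * Mz t)) t)
    (hMz : ∀ t : ℝ, HasDerivAt Mz (My t ^ 2 - Mx t * (Mx t + 1)) t)
    (T : ℝ) (hT : 0 < T)
    (hMxper : ∀ t : ℝ, Mx (t + T) = Mx t)
    (hMyper : ∀ t : ℝ, My (t + T) = My t)
    (hMzper : ∀ t : ℝ, Mz (t + T) = Mz t)
    (hE : (Mx 0 + 1) ^ 2 + My 0 ^ 2 + Mz 0 ^ 2 = 1) :
    ∫ t in (0 : ℝ)..T, Mz t = 0 := by
  have hc : Continuous Mz := continuous_iff_continuousAt.2 fun t => (hMz t).continuousAt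
  have hx := eq_mul_exp_integral hc hMx
  by_cases h0 : Mx 0 = 0
  · have hy := eq_mul_exp_integral (f := My) (g := fun t => -Mz t) hc.neg
      (fun t => by simpa using hMy t)
    have hy0 : My 0 = 0 := by
      rw [h0] at hE
      nlinarith [sq_nonneg (My 0), sq_nonneg (Mz 0)]
    have hz0 : Mz 0 = 0 := by
      rw [h0] at hE
      nlinarith [sq_nonneg (My 0), sq_nonneg (Mz 0)]
    have hd : ∀ t, deriv Mz t = 0 := fun t => by
      rw [(hMz t).deriv, hx t, hy t, h0, hy0]
      ring
    have hz : ∀ t, Mz t = 0 := fun t => by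
      rw [is_const_of_deriv_eq_zero (fun t => (hMz t).differentiableAt) hd t 0, hz0]
    simp [hz]
  · have h := hx T
    have hp := hMxper 0
    rw [zero_add] at hp
    rw [hp] at h
    exact Real.exp_eq_one_iff _ |>.1 (mul_left_cancel₀ h0 (by rw [← h, mul_one]))
end
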